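/- There is an isomorphism of k-coalgebras K ≅ C₄ ⊕ M*(2,k), where C₄ is the coalgebra with basis {1, G, X, GX}, Δ(1) = 1⊗1, Δ(G) = G⊗G, Δ(X) = X⊗G + 1⊗X, Δ(GX) = GX⊗1 + G⊗GX, ε(1) = ε(G) = 1, ε(X) = ε(GX) = 0 (the underlying coalgebra of Sweedler's 4-dimensional Hopf algebra), and M*(2,k) is the comatrix coalgebra with basis {e₁₁, e₁₂, e₂₁, e₂₂}, Δ(e_{ij}) = e_{i1}⊗e_{1j} + e_{i2}⊗e_{2j}, ε(e_{ij}) = δ_{ij}. -/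

import Mathlib

open scoped TensorProduct

/-- Generators of the Hopf algebra `K`. -/
inductive KGen : Type
  | a | b | c | d

open FreeAlgebra in
/-- The defining relations of the algebra `K`. -/
inductive KRel (𝕜 : Type) [Field 𝕜] (ξ : 𝕜) :
    FreeAlgebra 𝕜 KGen → FreeAlgebra 𝕜 KGen → Prop
  | ab : KRel 𝕜 ξ (ι 𝕜 KGen.a * ι 𝕜 KGen.b) (ξ • (ι 𝕜 KGen.b * ι 𝕜 KGen.a))
  | ac : KRel 𝕜 ξ (ι 𝕜 KGen.a * ι 𝕜 KGen.c) (ξ • (ι 𝕜 KGen.c * ι 𝕜 KGen.a))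
  | cb : KRel 𝕜 ξ (ι 𝕜 KGen.c * ι 𝕜 KGen.b) 0
  | bc : KRel 𝕜 ξ (ι 𝕜 KGen.b * ι 𝕜 KGen.c) 0
  | cd : KRel 𝕜 ξ (ι 𝕜 KGen.c * ι 𝕜 KGen.d) (ξ • (ι 𝕜 KGen.d * ι 𝕜 KGen.c))
  | bd : KRel 𝕜 ξ (ι 𝕜 KGen.b * ι 𝕜 KGen.d) (ξ • (ι 𝕜 KGen.d * ι 𝕜 KGen.b))
  | adcomm : KRel 𝕜 ξ (ι 𝕜 KGen.a * ι 𝕜 KGen.d) (ι 𝕜 KGen.d * ι 𝕜 KGen.a)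
  | adone : KRel 𝕜 ξ (ι 𝕜 KGen.a * ι 𝕜 KGen.d) 1
  | bsq : KRel 𝕜 ξ (ι 𝕜 KGen.b * ι 𝕜 KGen.b) 0
  | csq : KRel 𝕜 ξ (ι 𝕜 KGen.c * ι 𝕜 KGen.c) 0
  | aac : KRel 𝕜 ξ (ι 𝕜 KGen.a * ι 𝕜 KGen.a * ι 𝕜 KGen.c) (ι 𝕜 KGen.b)
  | afour : KRel 𝕜 ξ (ι 𝕜 KGen.a ^ 4) 1

/-- The 8-dimensional algebra `K`, the smallest Hopf algebra whose coradical is not a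
subalgebra, presented by generators and relations. -/
abbrev KAlg (𝕜 : Type) [Field 𝕜] (ξ : 𝕜) : Type := RingQuot (KRel 𝕜 ξ)

variable (𝕜 : Type) [Field 𝕜] (ξ : 𝕜)

/-- The generator `a` of `K`. -/
noncomputable def kA : KAlg 𝕜 ξ := RingQuot.mkAlgHom 𝕜 (KRel 𝕜 ξ) (FreeAlgebra.ι 𝕜 KGen.a)
/-- The generator `b` of `K`. -/
noncomputable def kB : KAlg 𝕜 ξ := RingQuot.mkAlgHom 𝕜 (KRel 𝕜 ξ) (FreeAlgebra.ι 𝕜 KGen.b)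
/-- The generator `c` of `K`. -/
noncomputable def kC : KAlg 𝕜 ξ := RingQuot.mkAlgHom 𝕜 (KRel 𝕜 ξ) (FreeAlgebra.ι 𝕜 KGen.c)
/-- The generator `d` of `K`. -/
noncomputable def kD : KAlg 𝕜 ξ := RingQuot.mkAlgHom 𝕜 (KRel 𝕜 ξ) (FreeAlgebra.ι 𝕜 KGen.d)

/-- The comultiplication of `K` takes the prescribed values on the generators. -/
def KComulOn (Δ : KAlg 𝕜 ξ →ₐ[𝕜] KAlg 𝕜 ξ ⊗[𝕜] KAlg 𝕜 ξ) : Prop :=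
  Δ (kA 𝕜 ξ) = kA 𝕜 ξ ⊗ₜ[𝕜] kA 𝕜 ξ + kB 𝕜 ξ ⊗ₜ[𝕜] kC 𝕜 ξ ∧
  Δ (kB 𝕜 ξ) = kA 𝕜 ξ ⊗ₜ[𝕜] kB 𝕜 ξ + kB 𝕜 ξ ⊗ₜ[𝕜] kD 𝕜 ξ ∧
  Δ (kC 𝕜 ξ) = kC 𝕜 ξ ⊗ₜ[𝕜] kA 𝕜 ξ + kD 𝕜 ξ ⊗ₜ[𝕜] kC 𝕜 ξ ∧
  Δ (kD 𝕜 ξ) = kC 𝕜 ξ ⊗ₜ[𝕜] kB 𝕜 ξ + kD 𝕜 ξ ⊗ₜ[𝕜] kD 𝕜 ξ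

/-- The counit of `K` takes the prescribed values on the generators. -/
def KCounitOn (ε : KAlg 𝕜 ξ →ₐ[𝕜] 𝕜) : Prop :=
  ε (kA 𝕜 ξ) = 1 ∧ ε (kB 𝕜 ξ) = 0 ∧ ε (kC 𝕜 ξ) = 0 ∧ ε (kD 𝕜 ξ) = 1

/-- Index type for the basis of `C₄ ⊕ M*(2,𝕜)`: the four elements `1, G, X, GX` of the
Sweedler coalgebra and the four comatrix elements `e_{ij}`. -/
abbrev C4MIdx : Type := Fin 4 ⊕ Fin 2 × Fin 2

/-- The underlying vector space of `C₄ ⊕ M*(2,𝕜)`. -/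
abbrev C4M (𝕜 : Type) [Field 𝕜] : Type := C4MIdx → 𝕜

/-- The standard basis vectors of `C₄ ⊕ M*(2,𝕜)`. -/
noncomputable def c4mE (𝕜 : Type) [Field 𝕜] (i : C4MIdx) : C4M 𝕜 := Pi.basisFun 𝕜 C4MIdx i

/-- The comultiplication of the coalgebra `C₄ ⊕ M*(2,𝕜)`: on the Sweedler part
`Δ(1) = 1⊗1`, `Δ(G) = G⊗G`, `Δ(X) = X⊗G + 1⊗X`, `Δ(GX) = GX⊗1 + G⊗GX`; on the comatrix
part `Δ(e_{ij}) = e_{i1}⊗e_{1j} + e_{i2}⊗e_{2j}`. -/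
noncomputable def c4mComul (𝕜 : Type) [Field 𝕜] : C4M 𝕜 →ₗ[𝕜] C4M 𝕜 ⊗[𝕜] C4M 𝕜 :=
  (Pi.basisFun 𝕜 C4MIdx).constr 𝕜 <| Sum.elim
    ![c4mE 𝕜 (.inl 0) ⊗ₜ[𝕜] c4mE 𝕜 (.inl 0),
      c4mE 𝕜 (.inl 1) ⊗ₜ[𝕜] c4mE 𝕜 (.inl 1),
      c4mE 𝕜 (.inl 2) ⊗ₜ[𝕜] c4mE 𝕜 (.inl 1) + c4mE 𝕜 (.inl 0) ⊗ₜ[𝕜] c4mE 𝕜 (.inl 2),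
      c4mE 𝕜 (.inl 3) ⊗ₜ[𝕜] c4mE 𝕜 (.inl 0) + c4mE 𝕜 (.inl 1) ⊗ₜ[𝕜] c4mE 𝕜 (.inl 3)]
    (fun p => c4mE 𝕜 (.inr (p.1, 0)) ⊗ₜ[𝕜] c4mE 𝕜 (.inr (0, p.2)) +
      c4mE 𝕜 (.inr (p.1, 1)) ⊗ₜ[𝕜] c4mE 𝕜 (.inr (1, p.2)))

/-- The counit of the coalgebra `C₄ ⊕ M*(2,𝕜)`: `ε(1) = ε(G) = 1`, `ε(X) = ε(GX) = 0`,
`ε(e_{ij}) = δ_{ij}`. -/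
noncomputable def c4mCounit (𝕜 : Type) [Field 𝕜] : C4M 𝕜 →ₗ[𝕜] 𝕜 :=
  (Pi.basisFun 𝕜 C4MIdx).constr 𝕜 <| Sum.elim
    ![(1 : 𝕜), 1, 0, 0] (fun p => if p.1 = (p.2 : Fin 2) then (1 : 𝕜) else 0)

theorem k_ac : kA 𝕜 ξ * kC 𝕜 ξ = ξ • (kC 𝕜 ξ * kA 𝕜 ξ) := by
  simpa [kA, kC] using RingQuot.mkAlgHom_rel 𝕜 (KRel.ac (𝕜 := 𝕜) (ξ := ξ))

theorem k_ad : kA 𝕜 ξ * kD 𝕜 ξ = 1 := by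
  simpa [kA, kD] using RingQuot.mkAlgHom_rel 𝕜 (KRel.adone (𝕜 := 𝕜) (ξ := ξ))

theorem k_da : kD 𝕜 ξ * kA 𝕜 ξ = 1 := by
  rw [← k_ad]
  simpa [kA, kD] using (RingQuot.mkAlgHom_rel 𝕜 (KRel.adcomm (𝕜 := 𝕜) (ξ := ξ))).symm

theorem k_cc : kC 𝕜 ξ * kC 𝕜 ξ = 0 := by
  simpa [kC] using RingQuot.mkAlgHom_rel 𝕜 (KRel.csq (𝕜 := 𝕜) (ξ := ξ))

theorem k_b : kB 𝕜 ξ = kA 𝕜 ξ * (kA 𝕜 ξ * kC 𝕜 ξ) := by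
  rw [← mul_assoc]
  simpa [kA, kB, kC] using (RingQuot.mkAlgHom_rel 𝕜 (KRel.aac (𝕜 := 𝕜) (ξ := ξ))).symm

theorem k_a4 : kA 𝕜 ξ * (kA 𝕜 ξ * (kA 𝕜 ξ * kA 𝕜 ξ)) = 1 := by
  have h : kA 𝕜 ξ ^ 4 = 1 := by
    simpa [kA] using RingQuot.mkAlgHom_rel 𝕜 (KRel.afour (𝕜 := 𝕜) (ξ := ξ))
  rw [← h]
  simp only [pow_succ, pow_zero, one_mul, mul_assoc]

theorem k_d : kD 𝕜 ξ = kA 𝕜 ξ * (kA 𝕜 ξ * kA 𝕜 ξ) := by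
  calc kD 𝕜 ξ = kD 𝕜 ξ * (kA 𝕜 ξ * (kA 𝕜 ξ * (kA 𝕜 ξ * kA 𝕜 ξ))) := by rw [k_a4, mul_one]
    _ = _ := by rw [← mul_assoc, k_da, one_mul]

theorem k_a4' (x : KAlg 𝕜 ξ) : kA 𝕜 ξ * (kA 𝕜 ξ * (kA 𝕜 ξ * (kA 𝕜 ξ * x))) = x := by
  calc _ = (kA 𝕜 ξ * (kA 𝕜 ξ * (kA 𝕜 ξ * kA 𝕜 ξ))) * x := by simp only [mul_assoc]
    _ = x := by rw [k_a4, one_mul]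

theorem k_cc' (x : KAlg 𝕜 ξ) : kC 𝕜 ξ * (kC 𝕜 ξ * x) = 0 := by
  rw [← mul_assoc, k_cc, zero_mul]

theorem k_ca (hξ : IsPrimitiveRoot ξ 4) :
    kC 𝕜 ξ * kA 𝕜 ξ = ξ ^ 3 • (kA 𝕜 ξ * kC 𝕜 ξ) := by
  rw [k_ac, smul_smul, ← pow_succ, hξ.pow_eq_one, one_smul]

theorem k_ca' (hξ : IsPrimitiveRoot ξ 4) (x : KAlg 𝕜 ξ) :
    kC 𝕜 ξ * (kA 𝕜 ξ * x) = ξ ^ 3 • (kA 𝕜 ξ * (kC 𝕜 ξ * x)) := by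
  rw [← mul_assoc, k_ca 𝕜 ξ hξ, smul_mul_assoc, mul_assoc]

/-- The elements of `K` corresponding to the standard basis of `C₄ ⊕ M*(2,𝕜)`. -/
noncomputable def kF : C4MIdx → KAlg 𝕜 ξ :=
  Sum.elim
    ![1, kA 𝕜 ξ * kA 𝕜 ξ, kA 𝕜 ξ * kC 𝕜 ξ, kA 𝕜 ξ * (kA 𝕜 ξ * (kA 𝕜 ξ * kC 𝕜 ξ))]
    (fun p => !![kA 𝕜 ξ, kB 𝕜 ξ; kC 𝕜 ξ, kD 𝕜 ξ] p.1 p.2)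

theorem kF_mul_mem (hξ : IsPrimitiveRoot ξ 4) (g : KAlg 𝕜 ξ)
    (hg : g = kA 𝕜 ξ ∨ g = kC 𝕜 ξ) (y : KAlg 𝕜 ξ)
    (hy : y ∈ Submodule.span 𝕜 (Set.range (kF 𝕜 ξ))) :
    g * y ∈ Submodule.span 𝕜 (Set.range (kF 𝕜 ξ)) := by
  have hm : ∀ i, kF 𝕜 ξ i ∈ Submodule.span 𝕜 (Set.range (kF 𝕜 ξ)) :=
    fun i => Submodule.subset_span ⟨i, rfl⟩
  have m0 := hm (.inl 0)
  have m1 := hm (.inl 1)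
  have m2 := hm (.inl 2)
  have m3 := hm (.inl 3)
  have m4 := hm (.inr (0, 0))
  have m5 := hm (.inr (0, 1))
  have m6 := hm (.inr (1, 0))
  have m7 := hm (.inr (1, 1))
  generalize hS : Submodule.span 𝕜 (Set.range (kF 𝕜 ξ)) = S at *
  subst hS
  refine Submodule.span_induction (p := fun y _ => g * y ∈ Submodule.span 𝕜 (Set.range (kF 𝕜 ξ)))
    ?_ ?_ ?_ ?_ hy
  · rintro _ ⟨i, rfl⟩
    generalize Submodule.span 𝕜 (Set.range (kF 𝕜 ξ)) = S at *
    simp [kF, k_b, k_d] at m0 m1 m2 m3 m4 m5 m6 m7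
    rcases hg with rfl | rfl
    · rcases i with i | ⟨i, j⟩
      · fin_cases i <;> simp [kF, k_a4', *]
      · fin_cases i <;> fin_cases j <;> simp [kF, k_b, k_d, k_a4, *]
    · rcases i with i | ⟨i, j⟩
      · fin_cases i <;>
          simp [kF, k_ca' 𝕜 ξ hξ, k_ca 𝕜 ξ hξ, k_cc, Submodule.smul_mem, *]
      · fin_cases i <;> fin_cases j <;>
          simp [kF, k_b, k_d, k_ca' 𝕜 ξ hξ, k_ca 𝕜 ξ hξ, k_cc, Submodule.smul_mem, *]
        exact Submodule.smul_mem _ _ (Submodule.smul_mem _ _ (Submodule.smul_mem _ _ m3))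
  · simp
  · intro x y _ _ hx hy
    rw [mul_add]
    exact Submodule.add_mem _ hx hy
  · intro r x _ hx
    rw [mul_smul_comm]
    exact Submodule.smul_mem _ _ hx

theorem kF_span (hξ : IsPrimitiveRoot ξ 4) (z : KAlg 𝕜 ξ) :
    z ∈ Submodule.span 𝕜 (Set.range (kF 𝕜 ξ)) := by
  obtain ⟨x, rfl⟩ := RingQuot.mkAlgHom_surjective 𝕜 (KRel 𝕜 ξ) z
  have hA := kF_mul_mem 𝕜 ξ hξ _ (Or.inl rfl)
  have hC := kF_mul_mem 𝕜 ξ hξ _ (Or.inr rfl)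
  have key : ∀ y ∈ Submodule.span 𝕜 (Set.range (kF 𝕜 ξ)),
      RingQuot.mkAlgHom 𝕜 (KRel 𝕜 ξ) x * y ∈ Submodule.span 𝕜 (Set.range (kF 𝕜 ξ)) := by
    induction x using FreeAlgebra.induction with
    | grade0 r =>
      intro y hy
      rw [AlgHom.commutes, ← Algebra.smul_def]
      exact Submodule.smul_mem _ _ hy
    | grade1 g =>
      intro y hy
      cases g with
      | a => exact hA y hy
      | b =>
        change kB 𝕜 ξ * y ∈ _
        rw [k_b, mul_assoc, mul_assoc]
        exact hA _ (hA _ (hC _ hy))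
      | c => exact hC y hy
      | d =>
        change kD 𝕜 ξ * y ∈ _
        rw [k_d, mul_assoc, mul_assoc]
        exact hA _ (hA _ (hA _ hy))
    | mul u v hu hv =>
      intro y hy
      rw [map_mul, mul_assoc]
      exact hu _ (hv _ hy)
    | add u v hu hv =>
      intro y hy
      rw [map_add, add_mul]
      exact Submodule.add_mem _ (hu _ hy) (hv _ hy)
  have h1 : (1 : KAlg 𝕜 ξ) ∈ Submodule.span 𝕜 (Set.range (kF 𝕜 ξ)) :=
    Submodule.subset_span ⟨.inl 0, rfl⟩
  simpa using key 1 h1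

/-- Images of the generators in the two-dimensional representations of `K`. -/
def repGen (t : 𝕜) : KGen → Matrix (Fin 2) (Fin 2) 𝕜
  | .a => !![ξ * t, 0; 0, t]
  | .b => !![0, ξ ^ 2 * t ^ 2; 0, 0]
  | .c => !![0, 1; 0, 0]
  | .d => !![ξ ^ 3 * t ^ 3, 0; 0, t ^ 3]

theorem rep_exists (hξ : ξ ^ 2 = -1) (t : 𝕜) (ht : t ^ 4 = 1) :
    ∃ θ : KAlg 𝕜 ξ →ₐ[𝕜] Matrix (Fin 2) (Fin 2) 𝕜,
      θ (kA 𝕜 ξ) = !![ξ * t, 0; 0, t] ∧ θ (kC 𝕜 ξ) = !![0, 1; 0, 0] := by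
  have h : ∀ ⦃x y : FreeAlgebra 𝕜 KGen⦄, KRel 𝕜 ξ x y →
      FreeAlgebra.lift 𝕜 (repGen 𝕜 ξ t) x = FreeAlgebra.lift 𝕜 (repGen 𝕜 ξ t) y := by
    have h4 : ξ ^ 4 = 1 := by linear_combination (ξ ^ 2 - 1) * hξ
    intro x y hxy
    cases hxy <;>
      simp only [map_mul, map_smul, map_pow, map_zero, map_one, FreeAlgebra.lift_ι_apply, repGen] <;>
      ext i j <;> fin_cases i <;> fin_cases j <;>
      simp [pow_succ, Matrix.mul_apply, Fin.sum_univ_two] <;> grind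
  refine ⟨RingQuot.liftAlgHom 𝕜 ⟨FreeAlgebra.lift 𝕜 (repGen 𝕜 ξ t), h⟩, ?_, ?_⟩
  · simp [kA, repGen]
  · simp [kC, repGen]

theorem kF_li (hc : CharZero 𝕜) (hξ : ξ ^ 2 = -1) : LinearIndependent 𝕜 (kF 𝕜 ξ) := by
  rw [Fintype.linearIndependent_iff]
  intro v hv
  have key : ∀ t : 𝕜, t ^ 4 = 1 →
      v (.inl 0) + t * v (.inr (0, 0)) + t ^ 2 * v (.inl 1) + t ^ 3 * v (.inr (1, 1)) = 0 ∧
      v (.inr (1, 0)) + (ξ * t) * v (.inl 2) + (ξ * t) ^ 2 * v (.inr (0, 1))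
        + (ξ * t) ^ 3 * v (.inl 3) = 0 := by
    intro t ht
    obtain ⟨θ, hA, hC⟩ := rep_exists 𝕜 ξ hξ t ht
    have h := congrArg θ hv
    simp [Fintype.sum_sum_type, Fintype.sum_prod_type, Fin.sum_univ_four, Fin.sum_univ_two,
      kF, k_b, k_d, hA, hC] at h
    have h1 := congrFun (congrFun h 1) 1
    have h2 := congrFun (congrFun h 0) 1
    simp at h1 h2
    constructor
    · linear_combination h1
    · linear_combination h2
  have h4 : ξ ^ 4 = 1 := by linear_combination (ξ ^ 2 - 1) * hξ
  obtain ⟨p1, q1⟩ := key 1 (by simp)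
  obtain ⟨p2, q2⟩ := key ξ h4
  obtain ⟨p3, q3⟩ := key (-1) (by norm_num)
  obtain ⟨p4, q4⟩ := key (-ξ) (by rw [← h4]; ring)
  have e4 : (4 : 𝕜) ≠ 0 := by norm_num
  rintro (i | ⟨i, j⟩)
  · fin_cases i <;> simp <;> grind
  · fin_cases i <;> fin_cases j <;> simp <;> grind

/-- There is an isomorphism of `𝕜`-coalgebras
`K ≅ C₄ ⊕ M*(2,𝕜)`, where `C₄` is the underlying coalgebra of Sweedler's 4-dimensional
Hopf algebra and `M*(2,𝕜)` is the 4-dimensional comatrix coalgebra. -/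
theorem stmt_4 (𝕜 : Type) [Field 𝕜] [IsAlgClosed 𝕜] [CharZero 𝕜]
    (ξ : 𝕜) (hξ : IsPrimitiveRoot ξ 4)
    (Δ : KAlg 𝕜 ξ →ₐ[𝕜] KAlg 𝕜 ξ ⊗[𝕜] KAlg 𝕜 ξ) (hΔ : KComulOn 𝕜 ξ Δ)
    (ε : KAlg 𝕜 ξ →ₐ[𝕜] 𝕜) (hε : KCounitOn 𝕜 ξ ε) :
    ∃ φ : KAlg 𝕜 ξ ≃ₗ[𝕜] C4M 𝕜,
      TensorProduct.map φ.toLinearMap φ.toLinearMap ∘ₗ Δ.toLinearMap =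
        c4mComul 𝕜 ∘ₗ φ.toLinearMap ∧
      c4mCounit 𝕜 ∘ₗ φ.toLinearMap = ε.toLinearMap := by
  have h2 : ξ ^ 2 = -1 := by
    have h4 := hξ.pow_eq_one
    have hne : ξ ^ 2 ≠ 1 := fun h => by
      have := hξ.pow_ne_one_of_pos_of_lt (by norm_num : (2 : ℕ) ≠ 0) (by norm_num : 2 < 4)
      exact this h
    have : (ξ ^ 2 - 1) * (ξ ^ 2 + 1) = 0 := by linear_combination h4
    rcases mul_eq_zero.mp this with h | h
    · exact absurd (sub_eq_zero.mp h) hne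
    · exact eq_neg_of_add_eq_zero_left h
  let B : Module.Basis C4MIdx 𝕜 (KAlg 𝕜 ξ) :=
    Module.Basis.mk (kF_li 𝕜 ξ inferInstance h2) (fun z _ => kF_span 𝕜 ξ hξ z)
  have hB : ∀ i, B i = kF 𝕜 ξ i := fun i => by simp [B]
  let φ : KAlg 𝕜 ξ ≃ₗ[𝕜] C4M 𝕜 := B.equiv (Pi.basisFun 𝕜 C4MIdx) (Equiv.refl _)
  have hφ : ∀ i, φ (kF 𝕜 ξ i) = c4mE 𝕜 i := fun i => by
    rw [← hB]; simp only [φ, Module.Basis.equiv_apply, c4mE, Equiv.refl_apply]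
  have p0 : φ 1 = c4mE 𝕜 (.inl 0) := hφ (.inl 0)
  have p1 : φ (kA 𝕜 ξ * kA 𝕜 ξ) = c4mE 𝕜 (.inl 1) := hφ (.inl 1)
  have p2 : φ (kA 𝕜 ξ * kC 𝕜 ξ) = c4mE 𝕜 (.inl 2) := hφ (.inl 2)
  have p3 : φ (kA 𝕜 ξ * (kA 𝕜 ξ * (kA 𝕜 ξ * kC 𝕜 ξ))) = c4mE 𝕜 (.inl 3) := hφ (.inl 3)
  have p4 : φ (kA 𝕜 ξ) = c4mE 𝕜 (.inr (0, 0)) := hφ (.inr (0, 0))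
  have p5 : φ (kB 𝕜 ξ) = c4mE 𝕜 (.inr (0, 1)) := hφ (.inr (0, 1))
  have p6 : φ (kC 𝕜 ξ) = c4mE 𝕜 (.inr (1, 0)) := hφ (.inr (1, 0))
  have p7 : φ (kD 𝕜 ξ) = c4mE 𝕜 (.inr (1, 1)) := hφ (.inr (1, 1))
  obtain ⟨dA, dB, dC, dD⟩ := hΔ
  obtain ⟨eA, eB, eC, eD⟩ := hε
  have dAA : Δ (kA 𝕜 ξ * kA 𝕜 ξ) = (kA 𝕜 ξ * kA 𝕜 ξ) ⊗ₜ[𝕜] (kA 𝕜 ξ * kA 𝕜 ξ) := by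
    rw [map_mul, dA]
    simp only [mul_add, add_mul, Algebra.TensorProduct.tmul_mul_tmul, k_b, mul_assoc,
      k_ca' 𝕜 ξ hξ, k_ca 𝕜 ξ hξ, k_cc, TensorProduct.tmul_smul, TensorProduct.smul_tmul',
      mul_smul_comm, smul_smul, mul_zero, TensorProduct.zero_tmul, TensorProduct.tmul_zero, add_zero]
    have : ξ ^ 3 * ξ ^ 3 = -1 := by linear_combination (ξ ^ 4 - ξ ^ 2 + 1) * h2
    simp [this, add_assoc, ← TensorProduct.add_tmul]
  have dAC : Δ (kA 𝕜 ξ * kC 𝕜 ξ) = (kA 𝕜 ξ * kC 𝕜 ξ) ⊗ₜ[𝕜] (kA 𝕜 ξ * kA 𝕜 ξ)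
      + 1 ⊗ₜ[𝕜] (kA 𝕜 ξ * kC 𝕜 ξ) := by
    rw [map_mul, dA, dC]
    simp [mul_add, add_mul, Algebra.TensorProduct.tmul_mul_tmul, k_b, mul_assoc, k_ad, k_cc]
  have dG : Δ (kA 𝕜 ξ * (kA 𝕜 ξ * (kA 𝕜 ξ * kC 𝕜 ξ))) =
      (kA 𝕜 ξ * (kA 𝕜 ξ * (kA 𝕜 ξ * kC 𝕜 ξ))) ⊗ₜ[𝕜] 1 +
      (kA 𝕜 ξ * kA 𝕜 ξ) ⊗ₜ[𝕜] (kA 𝕜 ξ * (kA 𝕜 ξ * (kA 𝕜 ξ * kC 𝕜 ξ))) := by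
    rw [← mul_assoc (kA 𝕜 ξ) (kA 𝕜 ξ) (kA 𝕜 ξ * kC 𝕜 ξ), map_mul, dAA, dAC]
    simp [mul_add, Algebra.TensorProduct.tmul_mul_tmul, mul_assoc, k_a4]
  have cE : ∀ i, c4mComul 𝕜 (c4mE 𝕜 i) = _ :=
    fun i => Module.Basis.constr_basis (Pi.basisFun 𝕜 C4MIdx) 𝕜 _ i
  have uE : ∀ i, c4mCounit 𝕜 (c4mE 𝕜 i) = _ := fun i => by
    rw [c4mCounit, c4mE, Module.Basis.constr_basis]
  refine ⟨φ, B.ext fun i => ?_, B.ext fun i => ?_⟩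
  · simp only [LinearMap.comp_apply, hB, LinearEquiv.coe_coe, hφ, cE, AlgHom.toLinearMap_apply]
    rcases i with i | ⟨i, j⟩
    · fin_cases i <;>
        simp [kF, dAA, dAC, dG, p0, p1, p2, p3, Algebra.TensorProduct.one_def]
    · fin_cases i <;> fin_cases j <;> simp [kF, dA, dB, dC, dD, p4, p5, p6, p7]
  · simp only [LinearMap.comp_apply, hB, LinearEquiv.coe_coe, hφ, uE, AlgHom.toLinearMap_apply]
    rcases i with i | ⟨i, j⟩
    · fin_cases i <;> simp [kF, eA, eC]
    · fin_cases i <;> fin_cases j <;> simp [kF, eA, eB, eC, eD]
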